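/- arXiv:1507.05367 — 5 statements merged into one kernel-verified Lean document; each statement's English description precedes it below -/
import Mathlib

section
/- Let G_1,…,G_M ⊆ {1,…,n}, let 1 ≤ p < ∞, and let x ∈ ℝ^n. Then the atomic-norm value inf{ Σ_{i=1}^K c_i : K ∈ ℕ, c_i ≥ 0, x = Σ_{i=1}^K c_i a_i, each a_i ∈ ℝ^n satisfies supp(a_i) ⊆ G_{j(i)} for some j(i) and ‖a_i‖_p = 1 } equals the latent group norm inf{ Σ_{j=1}^M ‖v_j‖_p : v_1,…,v_M ∈ ℝ^n, supp(v_j) ⊆ G_j for each j, Σ_{j=1}^M v_j = x } (with the convention that both infima are +∞ when the corresponding feasible set is empty). -/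
/-- The `ℓ_p` norm of a vector in `ℝ^n`, for `p ∈ [1, ∞)`. -/
noncomputable def lpNorm {n : ℕ} (p : ℝ) (v : Fin n → ℝ) : ℝ :=
  (∑ i, |v i| ^ p) ^ (1 / p)

/-- `lpNorm` is the norm of Mathlib's `PiLp`. -/
theorem lpNorm_eq_norm_toLp {n : ℕ} {p : ℝ} (hp : 1 ≤ p) (v : Fin n → ℝ) :
    lpNorm p v = ‖WithLp.toLp (ENNReal.ofReal p) v‖ := by
  have hp0 : 0 < p := by linarith
  have h : (ENNReal.ofReal p).toReal = p := ENNReal.toReal_ofReal hp0.le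
  rw [PiLp.norm_eq_sum (by rwa [h]), h]
  simp [lpNorm]

theorem lpNorm_nonneg {n : ℕ} (p : ℝ) (v : Fin n → ℝ) : 0 ≤ lpNorm p v := by
  unfold lpNorm
  positivity

theorem lpNorm_smul {n : ℕ} {p : ℝ} (hp : 1 ≤ p) (c : ℝ) (v : Fin n → ℝ) :
    lpNorm p (c • v) = |c| * lpNorm p v := by
  have : Fact (1 ≤ ENNReal.ofReal p) := ⟨by simpa using hp⟩
  rw [lpNorm_eq_norm_toLp hp, lpNorm_eq_norm_toLp hp, WithLp.toLp_smul, norm_smul,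
    Real.norm_eq_abs]

theorem lpNorm_sum_le {n : ℕ} {p : ℝ} (hp : 1 ≤ p) {ι : Type*} (s : Finset ι)
    (f : ι → Fin n → ℝ) : lpNorm p (∑ i ∈ s, f i) ≤ ∑ i ∈ s, lpNorm p (f i) := by
  have : Fact (1 ≤ ENNReal.ofReal p) := ⟨by simpa using hp⟩
  simp only [lpNorm_eq_norm_toLp hp, WithLp.toLp_sum]
  exact norm_sum_le _ _

theorem lpNorm_eq_zero {n : ℕ} {p : ℝ} (hp : 1 ≤ p) {v : Fin n → ℝ} :
    lpNorm p v = 0 ↔ v = 0 := by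
  have : Fact (1 ≤ ENNReal.ofReal p) := ⟨by simpa using hp⟩
  rw [lpNorm_eq_norm_toLp hp, norm_eq_zero, WithLp.toLp_eq_zero]

theorem sum_subtype_ne_zero {ι E F : Type*} [Fintype ι] [Zero E] [DecidableEq E]
    [AddCommMonoid F]
    (v : ι → E) (f : E → F) (hf : f 0 = 0) :
    ∑ j : {j // v j ≠ 0}, f (v j) = ∑ j, f (v j) := by
  rw [← Finset.sum_subtype {j | v j ≠ 0} (by simp) (fun j => f (v j)), Finset.sum_filter]
  refine Finset.sum_congr rfl fun j _ => ?_
  split_ifs with h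
  · rfl
  · rw [not_not.mp h, hf]

/-- **Atomic norm = latent group norm.** For groups `G_1, …, G_M ⊆ {1,…,n}` and `1 ≤ p < ∞`,
the infimum of `Σ c_i` over all decompositions `x = Σ c_i a_i` with `c_i ≥ 0` and each atom
`a_i` an `ℓ_p`-unit-norm vector supported on some group, equals the infimum of
`Σ_j ‖v_j‖_p` over decompositions `x = Σ_j v_j` with `supp(v_j) ⊆ G_j`. Both infima are
taken in `ℝ≥0∞` so that they are `+∞` when the feasible set is empty. -/
theorem stmt_1 (n M : ℕ) (Gr : Fin M → Finset (Fin n)) (p : ℝ) (hp : 1 ≤ p)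
    (x : Fin n → ℝ) :
    sInf { t : ENNReal | ∃ (K : ℕ) (c : Fin K → ℝ) (a : Fin K → (Fin n → ℝ)),
        (∀ i, 0 ≤ c i) ∧
        (∀ i, ∃ j : Fin M, ∀ l : Fin n, a i l ≠ 0 → l ∈ Gr j) ∧
        (∀ i, lpNorm p (a i) = 1) ∧
        (∀ l, x l = ∑ i, c i * a i l) ∧
        t = ENNReal.ofReal (∑ i, c i) } =
    sInf { t : ENNReal | ∃ v : Fin M → (Fin n → ℝ),
        (∀ j, ∀ l, v j l ≠ 0 → l ∈ Gr j) ∧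
        (∀ l, x l = ∑ j, v j l) ∧
        t = ENNReal.ofReal (∑ j, lpNorm p (v j)) } := by
  apply le_antisymm
  · refine le_sInf ?_
    rintro _ ⟨v, hsupp, hx, rfl⟩
    let e := Fintype.equivFin {j // v j ≠ 0}
    have hne (j : {j // v j ≠ 0}) : lpNorm p (v j) ≠ 0 := (lpNorm_eq_zero hp).not.mpr j.2
    refine sInf_le ⟨_, fun i => lpNorm p (v (e.symm i)),
      fun i => (lpNorm p (v (e.symm i)))⁻¹ • v (e.symm i),
      fun i => lpNorm_nonneg _ _, fun i => ⟨(e.symm i).1, fun l hl => hsupp _ l ?_⟩,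
      fun i => ?_, fun l => ?_, ?_⟩
    · exact right_ne_zero_of_mul hl
    · rw [lpNorm_smul hp, abs_of_nonneg (inv_nonneg.mpr (lpNorm_nonneg _ _)),
        inv_mul_cancel₀ (hne _)]
    · simp only [Pi.smul_apply, smul_eq_mul, mul_inv_cancel_left₀ (hne _)]
      rw [hx l, e.symm.sum_comp (fun j => v j l)]
      exact (sum_subtype_ne_zero v (fun w => w l) rfl).symm
    · rw [e.symm.sum_comp (fun j => lpNorm p (v j))]
      rw [sum_subtype_ne_zero v (lpNorm p) ((lpNorm_eq_zero hp).mpr rfl)]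
  · refine le_sInf ?_
    rintro _ ⟨K, c, a, hc, hsupp, hnorm, hx, rfl⟩
    choose g hg using hsupp
    refine sInf_le_of_le ⟨fun j => ∑ i with g i = j, c i • a i, fun j l hl => ?_,
      fun l => ?_, rfl⟩ (ENNReal.ofReal_le_ofReal ?_)
    · simp only [Finset.sum_apply] at hl
      obtain ⟨i, hi, hne⟩ := Finset.exists_ne_zero_of_sum_ne_zero hl
      rw [← (Finset.mem_filter.mp hi).2]
      exact hg i l (right_ne_zero_of_mul hne)
    · simp only [Finset.sum_apply, Pi.smul_apply, smul_eq_mul]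
      rw [hx l, Finset.sum_fiberwise]
    · calc ∑ j, lpNorm p (∑ i with g i = j, c i • a i)
          ≤ ∑ j, ∑ i with g i = j, lpNorm p (c i • a i) :=
            Finset.sum_le_sum fun j _ => lpNorm_sum_le hp _ _
        _ = ∑ i, lpNorm p (c i • a i) := Finset.sum_fiberwise _ _ _
        _ = ∑ i, c i := Finset.sum_congr rfl fun i _ => by
            rw [lpNorm_smul hp, hnorm, mul_one, abs_of_nonneg (hc i)]
end

section
/- Let f : ℝ^n → ℝ be differentiable with L-Lipschitz continuous gradient (L > 0), let R be a real-valued set function on subsets of {1,…,n}, and let λ ≥ 0. Given x ∈ ℝ^n, set w = x − (1/L)∇f(x). Suppose S ⊆ {1,…,n} minimizes the quantity λR(S') − (L/2) Σ_{j∈S'} w_j² over all subsets S' ⊆ {1,…,n}, and let x⁺ = w_S (the restriction of w to S, zero elsewhere). Then f(x⁺) + λR(S) ≤ f(x) + λR(supp(x)). -/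
open scoped Classical

/-- **Descent lemma**: a function whose gradient is `L`-Lipschitz lies below its quadratic
upper model at every point. -/
theorem le_add_inner_add_sq_of_lipschitz_gradient {E : Type*} [NormedAddCommGroup E]
    [InnerProductSpace ℝ E] [CompleteSpace E] {f : E → ℝ} {f' : E → E} {L : ℝ}
    (hf : ∀ y, HasGradientAt f (f' y) y) (hlip : ∀ v w, ‖f' v - f' w‖ ≤ L * ‖v - w‖) (x y : E) :
    f y ≤ f x + inner ℝ (f' x) (y - x) + L / 2 * ‖y - x‖ ^ 2 := by
  set d := y - x with hd
  let g : ℝ → ℝ := fun t => f (x + t • d) - t * inner ℝ (f' x) d - L / 2 * ‖d‖ ^ 2 * t ^ 2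
  have hg : ∀ t, HasDerivAt g
      (inner ℝ (f' (x + t • d)) d - inner ℝ (f' x) d - L * ‖d‖ ^ 2 * t) t := by
    intro t
    have hline : HasDerivAt (fun t : ℝ => x + t • d) d t := by
      simpa using ((hasDerivAt_id t).smul_const d).const_add x
    have hcomp : HasDerivAt (fun t : ℝ => f (x + t • d)) (inner ℝ (f' (x + t • d)) d) t := by
      have h := (hf (x + t • d)).hasFDerivAt.comp_hasDerivAt t hline
      rw [InnerProductSpace.toDual_apply_apply] at h
      exact h
    refine ((hcomp.sub ((hasDerivAt_id t).mul_const (inner ℝ (f' x) d))).sub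
      ((hasDerivAt_pow 2 t).const_mul (L / 2 * ‖d‖ ^ 2))).congr_deriv ?_
    push_cast
    ring
  have hanti : AntitoneOn g (Set.Icc 0 1) := by
    refine antitoneOn_of_deriv_nonpos (convex_Icc 0 1)
      (fun t _ => (hg t).continuousAt.continuousWithinAt)
      (fun t _ => (hg t).differentiableAt.differentiableWithinAt) fun t ht => ?_
    have ht0 : 0 ≤ t := by
      rw [interior_Icc] at ht
      exact ht.1.le
    have hnorm : ‖f' (x + t • d) - f' x‖ ≤ L * (t * ‖d‖) := by
      simpa [norm_smul, abs_of_nonneg ht0] using hlip (x + t • d) x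
    have hinner := real_inner_le_norm (f' (x + t • d) - f' x) d
    rw [inner_sub_left] at hinner
    rw [(hg t).deriv]
    nlinarith [mul_le_mul_of_nonneg_right hnorm (norm_nonneg d)]
  have hle : g 1 ≤ g 0 := hanti (by simp) (by simp) zero_le_one
  have hxy : x + d = y := by simp [hd]
  simp only [g, one_smul, zero_smul, hxy, add_zero] at hle
  linarith

/-- **Descent guarantee of the majorization–minimization scheme.** Let `f : ℝ^n → ℝ` be
differentiable with `L`-Lipschitz continuous gradient (`L > 0`), `R` a real-valued set
function on subsets of `{1,…,n}`, `λ ≥ 0`, and given `x`, set `w = x - (1/L)∇f(x)`. If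
`S` minimizes `λ R(S') - (L/2) Σ_{j∈S'} w_j²` over all subsets `S'`, and `x⁺ = w_S`, then
`f(x⁺) + λ R(S) ≤ f(x) + λ R(supp(x))`. -/
theorem stmt_6 (n : ℕ) (f : EuclideanSpace ℝ (Fin n) → ℝ)
    (f' : EuclideanSpace ℝ (Fin n) → EuclideanSpace ℝ (Fin n))
    (hf : ∀ y, HasGradientAt f (f' y) y)
    (L : ℝ) (hL : 0 < L)
    (hlip : ∀ v w : EuclideanSpace ℝ (Fin n), ‖f' v - f' w‖ ≤ L * ‖v - w‖)
    (R : Finset (Fin n) → ℝ) (lam : ℝ) (hlam : 0 ≤ lam)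
    (x w : EuclideanSpace ℝ (Fin n)) (hw : w = x - (1 / L) • f' x)
    (S : Finset (Fin n))
    (hS : ∀ S' : Finset (Fin n),
      lam * R S - (L / 2) * ∑ j ∈ S, (w j) ^ 2 ≤
        lam * R S' - (L / 2) * ∑ j ∈ S', (w j) ^ 2)
    (xp : EuclideanSpace ℝ (Fin n)) (hxp : ∀ j, xp j = if j ∈ S then w j else 0) :
    f xp + lam * R S ≤ f x + lam * R (Finset.univ.filter fun j => x j ≠ 0) := by
  have hdesc := le_add_inner_add_sq_of_lipschitz_gradient hf hlip x xp
  have hmin := hS (Finset.univ.filter fun j => x j ≠ 0)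
  have hgrad : ∀ j, f' x j = L * (x j - w j) := by
    intro j
    simp only [hw, PiLp.sub_apply, PiLp.smul_apply, smul_eq_mul]
    field_simp
    ring
  have hmodel : inner ℝ (f' x) (xp - x) + L / 2 * ‖xp - x‖ ^ 2 ≤
      L / 2 * ∑ j ∈ Finset.univ.filter (fun j => x j ≠ 0), (w j) ^ 2
        - L / 2 * ∑ j ∈ S, (w j) ^ 2 := by
    have hsumS : ∑ j ∈ S, (w j) ^ 2 = ∑ j, if j ∈ S then (w j) ^ 2 else 0 := by
      simp
    rw [EuclideanSpace.real_norm_sq_eq, PiLp.inner_apply, Finset.sum_filter, hsumS,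
      Finset.mul_sum, Finset.mul_sum, Finset.mul_sum, ← Finset.sum_add_distrib,
      ← Finset.sum_sub_distrib]
    refine Finset.sum_le_sum fun j _ => ?_
    simp only [PiLp.sub_apply, hgrad, hxp, RCLike.inner_apply, conj_trivial]
    have hsq := mul_nonneg hL.le (sq_nonneg (x j - w j))
    by_cases hx : x j = 0 <;> by_cases hj : j ∈ S <;> simp only [hx, hj, if_true, if_false,
      ne_eq, not_true_eq_false, not_false_eq_true] <;> nlinarith
  linarith
end

section
/- Let R be a submodular set function on subsets of {1,…,n} with R(∅) = 0. Then its Lovász extension r : ℝ^n → ℝ is a convex function. -/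
/-- The sum `Σ_k x_{σ(k)} (R({σ(1),…,σ(k)}) - R({σ(1),…,σ(k-1)}))` defining the Lovász
extension of the set function `R` at `x`, computed with the ordering `σ`. -/
noncomputable def lovSum {n : ℕ} (R : Finset (Fin n) → ℝ) (x : Fin n → ℝ)
    (σ : Equiv.Perm (Fin n)) : ℝ :=
  ∑ k : Fin n, x (σ k) * (R ((Finset.Iic k).image ⇑σ) - R ((Finset.Iio k).image ⇑σ))

namespace LovaszExtension

open Finset

/-- The first `m` elements of `Fin n`. -/
def initialSegment (n m : ℕ) : Finset (Fin n) := univ.filter fun i => i.val < m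

theorem initialSegment_zero (n : ℕ) : initialSegment n 0 = ∅ := by
  simp [initialSegment]

theorem initialSegment_self (n : ℕ) : initialSegment n n = univ := by
  simp [initialSegment]

theorem initialSegment_succ {n m : ℕ} (h : m < n) :
    initialSegment n (m + 1) = insert ⟨m, h⟩ (initialSegment n m) := by
  ext i
  simp only [initialSegment, mem_filter, mem_univ, true_and, mem_insert, Fin.ext_iff]
  omega

theorem notMem_initialSegment {n m : ℕ} (h : m < n) :
    (⟨m, h⟩ : Fin n) ∉ initialSegment n m := by
  simp [initialSegment]

theorem Iio_eq_initialSegment {n : ℕ} (k : Fin n) : Iio k = initialSegment n k := by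
  ext i
  simp [initialSegment]

theorem Iic_eq_initialSegment {n : ℕ} (k : Fin n) : Iic k = initialSegment n (k + 1) := by
  ext i
  simp only [initialSegment, mem_Iic, mem_filter, mem_univ, true_and, Fin.le_def]
  omega

/-- The increment of `R` on adding the `k`-th element in the ordering `σ`. -/
noncomputable def marginal {n : ℕ} (R : Finset (Fin n) → ℝ) (σ : Equiv.Perm (Fin n))
    (k : Fin n) : ℝ :=
  R ((Iic k).image σ) - R ((Iio k).image σ)

theorem marginal_mk {n m : ℕ} (R : Finset (Fin n) → ℝ) (σ : Equiv.Perm (Fin n)) (h : m < n) :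
    marginal R σ ⟨m, h⟩ =
      R ((initialSegment n (m + 1)).image σ) - R ((initialSegment n m).image σ) := by
  rw [marginal, Iic_eq_initialSegment, Iio_eq_initialSegment]

theorem sum_initialSegment_marginal {n : ℕ} {R : Finset (Fin n) → ℝ} (hR0 : R ∅ = 0)
    (σ : Equiv.Perm (Fin n)) {m : ℕ} (hm : m ≤ n) :
    ∑ k ∈ initialSegment n m, marginal R σ k = R ((initialSegment n m).image σ) := by
  induction m with
  | zero => simp [initialSegment_zero, hR0]
  | succ m ih =>
    rw [initialSegment_succ hm, sum_insert (notMem_initialSegment hm), ih (by omega),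
      marginal_mk, ← initialSegment_succ hm]
    ring

theorem sum_marginal_inter_initialSegment_le {n : ℕ} {R : Finset (Fin n) → ℝ} (hR0 : R ∅ = 0)
    (hsub : ∀ S T : Finset (Fin n), R (S ∪ T) + R (S ∩ T) ≤ R S + R T)
    (τ : Equiv.Perm (Fin n)) (S : Finset (Fin n)) {m : ℕ} (hm : m ≤ n) :
    ∑ k ∈ initialSegment n m, (if τ k ∈ S then marginal R τ k else 0) ≤
      R (S ∩ (initialSegment n m).image τ) := by
  induction m with
  | zero => simp [initialSegment_zero, hR0]
  | succ m ih =>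
    have ih := ih (by omega)
    rw [initialSegment_succ hm, sum_insert (notMem_initialSegment hm), image_insert]
    split_ifs with hS
    · have h := hsub (S ∩ insert (τ ⟨m, hm⟩) ((initialSegment n m).image τ))
        ((initialSegment n m).image τ)
      have hunion : S ∩ insert (τ ⟨m, hm⟩) ((initialSegment n m).image τ) ∪
          (initialSegment n m).image τ = insert (τ ⟨m, hm⟩) ((initialSegment n m).image τ) := by
        grind
      have hinter : S ∩ insert (τ ⟨m, hm⟩) ((initialSegment n m).image τ) ∩
          (initialSegment n m).image τ = S ∩ (initialSegment n m).image τ := by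
        grind
      rw [hunion, hinter] at h
      rw [marginal_mk, initialSegment_succ hm, image_insert]
      linarith
    · rw [inter_insert_of_notMem hS]
      linarith

/-- The marginals of a submodular function along any ordering lie in its base polytope. -/
theorem sum_marginal_symm_le {n : ℕ} {R : Finset (Fin n) → ℝ} (hR0 : R ∅ = 0)
    (hsub : ∀ S T : Finset (Fin n), R (S ∪ T) + R (S ∩ T) ≤ R S + R T)
    (τ : Equiv.Perm (Fin n)) (S : Finset (Fin n)) :
    ∑ j ∈ S, marginal R τ (τ.symm j) ≤ R S := by
  have h := sum_marginal_inter_initialSegment_le hR0 hsub τ S le_rfl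
  rw [initialSegment_self, image_univ_equiv, inter_univ] at h
  refine le_trans (le_of_eq ?_) h
  rw [← Equiv.sum_comp τ.symm]
  simp

theorem sum_marginal_symm_univ {n : ℕ} {R : Finset (Fin n) → ℝ} (hR0 : R ∅ = 0)
    (τ : Equiv.Perm (Fin n)) : ∑ j, marginal R τ (τ.symm j) = R univ := by
  have h := sum_initialSegment_marginal hR0 τ le_rfl
  rw [initialSegment_self, image_univ_equiv] at h
  rw [Equiv.sum_comp τ.symm, h]

theorem mul_sum_initialSegment_le {n : ℕ} {f g : Fin n → ℝ} (hf : Antitone f)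
    (hg : ∀ m ≤ n, 0 ≤ ∑ i ∈ initialSegment n m, g i) {m : ℕ} (hm : m ≤ n) {c : ℝ}
    (hc : ∀ i ∈ initialSegment n m, c ≤ f i) :
    c * ∑ i ∈ initialSegment n m, g i ≤ ∑ i ∈ initialSegment n m, f i * g i := by
  induction m generalizing c with
  | zero => simp [initialSegment_zero]
  | succ m ih =>
    have hlast := ih (by omega) (c := f ⟨m, hm⟩) fun i hi => hf <| by
      simp only [initialSegment, mem_filter, mem_univ, true_and] at hi
      exact hi.le
    have hmul := mul_le_mul_of_nonneg_right
      (hc ⟨m, hm⟩ (by simp [initialSegment])) (hg (m + 1) hm)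
    rw [initialSegment_succ hm, sum_insert (notMem_initialSegment hm)] at hmul ⊢
    rw [sum_insert (notMem_initialSegment hm)]
    linarith

theorem sum_mul_nonneg_of_antitone {n : ℕ} {f g : Fin n → ℝ} (hf : Antitone f)
    (hg : ∀ m ≤ n, 0 ≤ ∑ i ∈ initialSegment n m, g i) (hg0 : ∑ i, g i = 0) :
    0 ≤ ∑ i, f i * g i := by
  obtain ⟨c, hc⟩ := (Set.finite_range f).bddBelow
  have h := mul_sum_initialSegment_le hf hg le_rfl (c := c) fun i _ => hc ⟨i, rfl⟩
  rwa [initialSegment_self, hg0, mul_zero] at h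

/-- A sorting permutation maximizes the sum defining the Lovász extension. -/
theorem lovSum_le_of_antitone {n : ℕ} {R : Finset (Fin n) → ℝ} (hR0 : R ∅ = 0)
    (hsub : ∀ S T : Finset (Fin n), R (S ∪ T) + R (S ∩ T) ≤ R S + R T)
    {x : Fin n → ℝ} {σ : Equiv.Perm (Fin n)} (hσ : Antitone (x ∘ σ))
    (τ : Equiv.Perm (Fin n)) : lovSum R x τ ≤ lovSum R x σ := by
  have hτ : lovSum R x τ = ∑ k, x (σ k) * marginal R τ (τ.symm (σ k)) := by
    rw [Equiv.sum_comp σ fun j => x j * marginal R τ (τ.symm j), ← Equiv.sum_comp τ]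
    simp [lovSum, marginal]
  have h := sum_mul_nonneg_of_antitone hσ
    (g := fun k => marginal R σ k - marginal R τ (τ.symm (σ k))) ?_ ?_
  · simp only [mul_sub, sum_sub_distrib, Function.comp_apply] at h
    rw [hτ]
    simpa only [lovSum, marginal, mul_sub, sum_sub_distrib, sub_nonneg] using h
  · intro m hm
    have hle := sum_marginal_symm_le hR0 hsub τ ((initialSegment n m).image σ)
    rw [sum_image σ.injective.injOn] at hle
    rw [sum_sub_distrib, sum_initialSegment_marginal hR0 σ hm]
    linarith
  · have hσ' := sum_initialSegment_marginal hR0 σ le_rfl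
    rw [initialSegment_self, image_univ_equiv] at hσ'
    rw [sum_sub_distrib, hσ', Equiv.sum_comp σ fun j => marginal R τ (τ.symm j),
      sum_marginal_symm_univ hR0, sub_self]

theorem exists_perm_antitone {n : ℕ} (x : Fin n → ℝ) :
    ∃ σ : Equiv.Perm (Fin n), Antitone (x ∘ σ) :=
  ⟨Tuple.sort (-x), fun _ _ h => neg_le_neg_iff.mp (Tuple.monotone_sort (-x) h)⟩

theorem lovSum_add_smul {n : ℕ} (R : Finset (Fin n) → ℝ) (x y : Fin n → ℝ) (a b : ℝ)
    (σ : Equiv.Perm (Fin n)) :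
    lovSum R (a • x + b • y) σ = a * lovSum R x σ + b * lovSum R y σ := by
  simp only [lovSum, mul_sum, ← sum_add_distrib, Pi.add_apply, Pi.smul_apply, smul_eq_mul]
  exact sum_congr rfl fun _ _ => by ring

end LovaszExtension

/-- **The Lovász extension of a submodular function is convex.** Let `R` be a submodular set
function on subsets of `{1,…,n}` with `R(∅) = 0`, and let `r` be its Lovász extension (i.e.
`r x` equals the defining sum for every permutation sorting the coordinates of `x` in
nonincreasing order). Then `r` is convex on `ℝ^n`. -/
theorem stmt_9 (n : ℕ) (R : Finset (Fin n) → ℝ) (hR0 : R ∅ = 0)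
    (hsub : ∀ S T : Finset (Fin n), R (S ∪ T) + R (S ∩ T) ≤ R S + R T)
    (r : (Fin n → ℝ) → ℝ)
    (hr : ∀ (x : Fin n → ℝ) (σ : Equiv.Perm (Fin n)),
      (∀ k l : Fin n, k ≤ l → x (σ l) ≤ x (σ k)) → r x = lovSum R x σ) :
    ConvexOn ℝ Set.univ r := by
  refine ⟨convex_univ, fun x _ y _ a b ha hb _ => ?_⟩
  obtain ⟨σ, hσ⟩ := LovaszExtension.exists_perm_antitone x
  obtain ⟨τ, hτ⟩ := LovaszExtension.exists_perm_antitone y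
  obtain ⟨ρ, hρ⟩ := LovaszExtension.exists_perm_antitone (a • x + b • y)
  rw [hr x σ fun _ _ h => hσ h, hr y τ fun _ _ h => hτ h, hr (a • x + b • y) ρ fun _ _ h => hρ h,
    LovaszExtension.lovSum_add_smul, smul_eq_mul, smul_eq_mul]
  exact add_le_add
    (mul_le_mul_of_nonneg_left (LovaszExtension.lovSum_le_of_antitone hR0 hsub hσ ρ) ha)
    (mul_le_mul_of_nonneg_left (LovaszExtension.lovSum_le_of_antitone hR0 hsub hτ ρ) hb)
end

section
/- Let R be a monotone submodular set function on subsets of {1,…,n} with R(∅) = 0 and R({i}) > 0 for every singleton {i}. Then the function Ω_sub(x) = r(|x|), where r is the Lovász extension of R and |x| is the vector of absolute values, defines a norm on ℝ^n: Ω_sub(x) ≥ 0 with equality iff x = 0, Ω_sub(λx) = |λ|Ω_sub(x) for all λ ∈ ℝ, and Ω_sub(x + y) ≤ Ω_sub(x) + Ω_sub(y). -/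
/-- Abel summation: an antitone nonnegative weighting of a sequence with nonnegative partial sums
has a nonnegative sum; more precisely the sum dominates any nonnegative lower bound of the weights
times the total. -/
lemma mul_sum_le_sum_mul_of_antitone {n : ℕ} {a d : Fin n → ℝ} {c : ℝ} (hc : 0 ≤ c)
    (hca : ∀ i, c ≤ a i) (ha : Antitone a) (hd : ∀ k, 0 ≤ ∑ i ∈ Finset.Iic k, d i) :
    c * ∑ i, d i ≤ ∑ i, a i * d i := by
  induction n generalizing c with
  | zero => simp
  | succ n ih =>
    have hlast : 0 ≤ ∑ i, d i := by
      have h := hd (Fin.last n)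
      rwa [← Fin.top_eq_last, Finset.Iic_top] at h
    have hinit := ih (a := fun i => a i.castSucc) (d := fun i => d i.castSucc)
      (hc.trans (hca (Fin.last n))) (fun i => ha (Fin.le_last _))
      (fun i j hij => ha (Fin.castSucc_le_castSucc_iff.2 hij)) (fun k => by
        have h := hd k.castSucc
        rwa [← Fin.map_castSuccEmb_Iic, Finset.sum_map] at h)
    calc c * ∑ i, d i ≤ a (Fin.last n) * ∑ i, d i :=
          mul_le_mul_of_nonneg_right (hca _) hlast
      _ ≤ ∑ i, a i * d i := by
          rw [Fin.sum_univ_castSucc, Fin.sum_univ_castSucc, mul_add]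
          linarith

/-- The increments of `R` along the ordering `σ` telescope over initial segments. -/
lemma sum_increments_eq_of_isLowerSet {n : ℕ} {R : Finset (Fin n) → ℝ} (hR0 : R ∅ = 0)
    (σ : Equiv.Perm (Fin n)) (T : Finset (Fin n)) (hT : IsLowerSet (T : Set (Fin n))) :
    ∑ k ∈ T, (R ((Finset.Iic k).image σ) - R ((Finset.Iio k).image σ)) = R (T.image σ) := by
  induction T using Finset.induction_on_max with
  | empty => simp [hR0]
  | insert m S hS ih =>
    have hm : m ∉ S := fun h => lt_irrefl _ (hS m h)
    have hSm : S = Finset.Iio m := by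
      ext j
      refine ⟨fun h => Finset.mem_Iio.2 (hS j h), fun h => ?_⟩
      have hj := Finset.mem_Iio.1 h
      have hmem : j ∈ insert m S := hT hj.le (Finset.mem_insert_self m S)
      exact (Finset.mem_insert.1 hmem).resolve_left hj.ne
    have hlow : IsLowerSet (S : Set (Fin n)) := by
      rw [hSm, Finset.coe_Iio]
      exact isLowerSet_Iio m
    rw [Finset.sum_insert hm, ih hlow, hSm, Finset.Iio_insert]
    ring

/-- The increments of a submodular function along an ordering lie in its submodular polyhedron. -/
lemma sum_increments_le {n : ℕ} {R : Finset (Fin n) → ℝ} (hR0 : R ∅ = 0)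
    (hsub : ∀ S T : Finset (Fin n), R (S ∪ T) + R (S ∩ T) ≤ R S + R T)
    (σ : Equiv.Perm (Fin n)) (T : Finset (Fin n)) :
    ∑ k ∈ T, (R ((Finset.Iic k).image σ) - R ((Finset.Iio k).image σ)) ≤ R (T.image σ) := by
  induction T using Finset.induction_on_max with
  | empty => simp [hR0]
  | insert m S hS ih =>
    have hm : m ∉ S := fun h => lt_irrefl _ (hS m h)
    have hunion : insert m S ∪ Finset.Iio m = Finset.Iic m := by
      ext j
      have := hS j
      simp only [Finset.mem_union, Finset.mem_insert, Finset.mem_Iio, Finset.mem_Iic]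
      grind
    have hinter : insert m S ∩ Finset.Iio m = S := by
      ext j
      have := hS j
      simp only [Finset.mem_inter, Finset.mem_insert, Finset.mem_Iio]
      grind
    have h := hsub ((insert m S).image σ) ((Finset.Iio m).image σ)
    rw [← Finset.image_union, ← Finset.image_inter _ _ σ.injective, hunion, hinter] at h
    rw [Finset.sum_insert hm]
    linarith

/-- For a nonnegative vector sorted by `σ`, the Lovász sum dominates every linear functional whose
weights lie in the submodular polyhedron of `R`. -/
lemma sum_mul_le_lovSum {n : ℕ} {R : Finset (Fin n) → ℝ} (hR0 : R ∅ = 0) {w z : Fin n → ℝ}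
    (hw : ∀ S : Finset (Fin n), ∑ i ∈ S, w i ≤ R S) (hz : ∀ i, 0 ≤ z i)
    {σ : Equiv.Perm (Fin n)} (hσ : Antitone (z ∘ σ)) :
    ∑ i, z i * w i ≤ lovSum R z σ := by
  have habel := mul_sum_le_sum_mul_of_antitone (a := z ∘ σ)
    (d := fun k => R ((Finset.Iic k).image σ) - R ((Finset.Iio k).image σ) - w (σ k))
    le_rfl (fun i => hz (σ i)) hσ (fun k => by
      have hlow : IsLowerSet (Finset.Iic k : Set (Fin n)) := by
        rw [Finset.coe_Iic]
        exact isLowerSet_Iic k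
      have h := hw ((Finset.Iic k).image σ)
      rw [Finset.sum_image σ.injective.injOn] at h
      rw [Finset.sum_sub_distrib, sum_increments_eq_of_isLowerSet hR0 σ _ hlow]
      linarith)
  rw [← Equiv.sum_comp σ, lovSum]
  simp only [Function.comp_apply, mul_sub, Finset.sum_sub_distrib, zero_mul] at habel ⊢
  linarith

/-- For a nonnegative vector, a sorting permutation maximizes the Lovász sum of a submodular
function. -/
lemma lovSum_le_lovSum_of_antitone {n : ℕ} {R : Finset (Fin n) → ℝ} (hR0 : R ∅ = 0)
    (hsub : ∀ S T : Finset (Fin n), R (S ∪ T) + R (S ∩ T) ≤ R S + R T) {z : Fin n → ℝ}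
    (hz : ∀ i, 0 ≤ z i) {σ : Equiv.Perm (Fin n)} (hσ : Antitone (z ∘ σ))
    (τ : Equiv.Perm (Fin n)) : lovSum R z τ ≤ lovSum R z σ := by
  have h := sum_mul_le_lovSum hR0 (w := fun i => R ((Finset.Iic (τ.symm i)).image τ) -
      R ((Finset.Iio (τ.symm i)).image τ)) (fun S => by
    have h := sum_increments_le hR0 hsub τ (S.image τ.symm)
    rw [Finset.sum_image τ.symm.injective.injOn, Finset.image_image] at h
    simpa using h) hz hσ
  rw [← Equiv.sum_comp τ] at h
  simpa [lovSum] using h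

/-- Every real vector can be sorted in nonincreasing order. -/
lemma exists_perm_antitone_comp {n : ℕ} (z : Fin n → ℝ) :
    ∃ σ : Equiv.Perm (Fin n), Antitone (z ∘ σ) :=
  ⟨Tuple.sort (-z), fun _ _ hij => neg_le_neg_iff.1 (Tuple.monotone_sort (-z) hij)⟩

/-- **`Ω_sub(x) = r(|x|)` is a norm.** Let `R` be a monotone submodular set function on
subsets of `{1,…,n}` with `R(∅) = 0` and `R({i}) > 0` for every singleton, and let `r` be
its Lovász extension (i.e. `r x` equals the defining sum for every permutation sorting the
coordinates of `x` in nonincreasing order). Then `Ω_sub(x) = r(|x|)` is nonnegative,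
vanishes exactly at `0`, is absolutely homogeneous, and satisfies the triangle
inequality. -/
theorem stmt_13 (n : ℕ) (R : Finset (Fin n) → ℝ) (hR0 : R ∅ = 0)
    (hmono : ∀ S T : Finset (Fin n), S ⊆ T → R S ≤ R T)
    (hsub : ∀ S T : Finset (Fin n), R (S ∪ T) + R (S ∩ T) ≤ R S + R T)
    (hpos : ∀ i : Fin n, 0 < R {i})
    (r : (Fin n → ℝ) → ℝ)
    (hr : ∀ (x : Fin n → ℝ) (σ : Equiv.Perm (Fin n)),
      (∀ k l : Fin n, k ≤ l → x (σ l) ≤ x (σ k)) → r x = lovSum R x σ) :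
    (∀ x : Fin n → ℝ, 0 ≤ r (fun i => |x i|)) ∧
    (∀ x : Fin n → ℝ, r (fun i => |x i|) = 0 ↔ x = 0) ∧
    (∀ (a : ℝ) (x : Fin n → ℝ),
      r (fun i => |a * x i|) = |a| * r (fun i => |x i|)) ∧
    (∀ x y : Fin n → ℝ,
      r (fun i => |x i + y i|) ≤ r (fun i => |x i|) + r (fun i => |y i|)) := by
  have hr' {z : Fin n → ℝ} {σ : Equiv.Perm (Fin n)} (hσ : Antitone (z ∘ σ)) :
      r z = lovSum R z σ := hr z σ fun _ _ hkl => hσ hkl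
  have hinc (σ : Equiv.Perm (Fin n)) (k : Fin n) :
      0 ≤ R ((Finset.Iic k).image σ) - R ((Finset.Iio k).image σ) :=
    sub_nonneg.2 (hmono _ _ (Finset.image_subset_image Finset.Iio_subset_Iic_self))
  have hnonneg (S : Finset (Fin n)) : 0 ≤ R S := hR0 ▸ hmono _ _ (Finset.empty_subset S)
  refine ⟨fun x => ?_, fun x => ⟨fun hx => ?_, ?_⟩, fun a x => ?_, fun x y => ?_⟩
  · obtain ⟨σ, hσ⟩ := exists_perm_antitone_comp fun i => |x i|
    rw [hr' hσ]
    exact Finset.sum_nonneg fun k _ => mul_nonneg (abs_nonneg _) (hinc σ k)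
  · obtain ⟨σ, hσ⟩ := exists_perm_antitone_comp fun i => |x i|
    rw [hr' hσ] at hx
    funext i
    have h := sum_mul_le_lovSum hR0 (w := Pi.single i (R {i})) (fun S => by
      rw [Finset.sum_pi_single']
      split_ifs with hi
      · exact hmono _ _ (Finset.singleton_subset_iff.2 hi)
      · exact hnonneg S) (fun i => abs_nonneg (x i)) hσ
    rw [hx, Finset.sum_eq_single i (fun j _ hj => by simp [hj]) (by simp), Pi.single_eq_same] at h
    exact abs_nonpos_iff.1 (nonpos_of_mul_nonpos_left h (hpos i))
  · rintro rfl
    rw [hr _ 1 (by simp)]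
    simp [lovSum]
  · obtain ⟨σ, hσ⟩ := exists_perm_antitone_comp fun i => |x i|
    have hσa : Antitone ((fun i => |a * x i|) ∘ σ) := fun k l hkl => by
      simpa only [Function.comp_apply, abs_mul] using
        mul_le_mul_of_nonneg_left (hσ hkl) (abs_nonneg a)
    rw [hr' hσ, hr' hσa, lovSum, lovSum, Finset.mul_sum]
    simp only [abs_mul, mul_assoc]
  · obtain ⟨σ, hσ⟩ := exists_perm_antitone_comp fun i => |x i|
    obtain ⟨τ, hτ⟩ := exists_perm_antitone_comp fun i => |y i|
    obtain ⟨ρ, hρ⟩ := exists_perm_antitone_comp fun i => |x i + y i|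
    rw [hr' hσ, hr' hτ, hr' hρ]
    calc lovSum R (fun i => |x i + y i|) ρ
        ≤ lovSum R (fun i => |x i|) ρ + lovSum R (fun i => |y i|) ρ := by
          simp only [lovSum, ← Finset.sum_add_distrib, ← add_mul]
          exact Finset.sum_le_sum fun k _ =>
            mul_le_mul_of_nonneg_right (abs_add_le _ _) (hinc ρ k)
      _ ≤ _ := add_le_add
          (lovSum_le_lovSum_of_antitone hR0 hsub (fun i => abs_nonneg (x i)) hσ ρ)
          (lovSum_le_lovSum_of_antitone hR0 hsub (fun i => abs_nonneg (y i)) hτ ρ)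
end

section
/- Let R be a symmetric submodular set function on subsets of N = {1,…,n} with R(∅) = 0, and let r be its Lovász extension. Then for every x ∈ ℝ^n with ‖x‖_∞ ≤ 1, the minimum of r(δ) over all δ ∈ [0,1]^n with δ_i ≥ |x_i| for all i equals 0, and it is attained at any constant vector δ = c·(1,…,1) with ‖x‖_∞ ≤ c ≤ 1. -/
/-- Summation by parts for an antitone weight: if `F` is nonnegative and vanishes at `0`, then
the `a`-weighted sum of the increments of `F` is at least any lower bound of `a` times `F n`. -/
lemma mul_le_sum_mul_sub_of_antitone {n : ℕ} {a : Fin n → ℝ} (ha : Antitone a) {F : ℕ → ℝ}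
    (hF : ∀ k, 0 ≤ F k) (hF0 : F 0 = 0) {c : ℝ} (hc : ∀ i, c ≤ a i) :
    c * F n ≤ ∑ k : Fin n, a k * (F (k + 1) - F k) := by
  induction n generalizing c with
  | zero => simp [hF0]
  | succ n ih =>
    have h := ih (a := fun i => a i.castSucc)
      (fun i j hij => ha (Fin.castSucc_le_castSucc_iff.mpr hij))
      (fun i => ha (Fin.le_last i.castSucc))
    have hlast := mul_le_mul_of_nonneg_right (hc (Fin.last n)) (hF (n + 1))
    rw [Fin.sum_univ_castSucc]
    simp only [Fin.val_castSucc, Fin.val_last]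
    linarith

/-- A symmetric submodular function vanishing at `∅` is nonnegative. -/
lemma nonneg_of_symmetric_submodular {α : Type*} [Fintype α] [DecidableEq α]
    {R : Finset α → ℝ} (hR0 : R ∅ = 0)
    (hsub : ∀ S T : Finset α, R (S ∪ T) + R (S ∩ T) ≤ R S + R T)
    (hsym : ∀ S : Finset α, R S = R Sᶜ) (S : Finset α) : 0 ≤ R S := by
  have h := hsub S Sᶜ
  have huniv : R Finset.univ = 0 := by rw [hsym, Finset.compl_univ, hR0]
  rw [Finset.union_compl, Finset.inter_compl, huniv, hR0, ← hsym S] at h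
  linarith

/-- The value of `R` on the first `k` elements in the ordering `σ`. -/
def chainValue {n : ℕ} (R : Finset (Fin n) → ℝ) (σ : Equiv.Perm (Fin n)) (k : ℕ) : ℝ :=
  R ((Finset.univ.filter fun i : Fin n => (i : ℕ) < k).image σ)

lemma chainValue_zero {n : ℕ} (R : Finset (Fin n) → ℝ) (σ : Equiv.Perm (Fin n)) :
    chainValue R σ 0 = R ∅ := by
  simp [chainValue]

lemma chainValue_self {n : ℕ} (R : Finset (Fin n) → ℝ) (σ : Equiv.Perm (Fin n)) :
    chainValue R σ n = R Finset.univ := by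
  simp [chainValue]

lemma lovSum_eq_sum_chainValue {n : ℕ} (R : Finset (Fin n) → ℝ) (x : Fin n → ℝ)
    (σ : Equiv.Perm (Fin n)) :
    lovSum R x σ =
      ∑ k : Fin n, x (σ k) * (chainValue R σ (k + 1) - chainValue R σ k) := by
  refine Finset.sum_congr rfl fun k _ => ?_
  have hIic : Finset.Iic k = Finset.univ.filter fun i : Fin n => (i : ℕ) < k + 1 := by
    ext i
    simp only [Finset.mem_Iic, Finset.mem_filter, Finset.mem_univ, true_and, Fin.le_def]
    omega
  have hIio : Finset.Iio k = Finset.univ.filter fun i : Fin n => (i : ℕ) < k := by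
    ext i
    simp
  rw [hIic, hIio, chainValue, chainValue]

/-- **The convex envelope of `R(supp(·))` for symmetric submodular `R` vanishes.** Let `R`
be a symmetric submodular set function with `R(∅) = 0` and let `r` be its Lovász extension
(i.e. `r x` equals the defining sum for every permutation sorting the coordinates of `x`
in nonincreasing order). For every `x` with `‖x‖_∞ ≤ 1`, the minimum of `r(δ)` over all
`δ ∈ [0,1]^n` with `δ ≥ |x|` coordinatewise equals `0`, attained at every constant vector
`δ = c·(1,…,1)` with `‖x‖_∞ ≤ c ≤ 1`. -/
theorem stmt_18 (n : ℕ) (R : Finset (Fin n) → ℝ) (hR0 : R ∅ = 0)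
    (hsub : ∀ S T : Finset (Fin n), R (S ∪ T) + R (S ∩ T) ≤ R S + R T)
    (hsym : ∀ S : Finset (Fin n), R S = R Sᶜ)
    (r : (Fin n → ℝ) → ℝ)
    (hr : ∀ (x : Fin n → ℝ) (σ : Equiv.Perm (Fin n)),
      (∀ k l : Fin n, k ≤ l → x (σ l) ≤ x (σ k)) → r x = lovSum R x σ)
    (x : Fin n → ℝ) (hx : ∀ i, |x i| ≤ 1) :
    (∀ δ : Fin n → ℝ, (∀ i, 0 ≤ δ i ∧ δ i ≤ 1) → (∀ i, |x i| ≤ δ i) → (0 : ℝ) ≤ r δ) ∧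
    (∀ c : ℝ, (∀ i, |x i| ≤ c) → c ≤ 1 → r (fun _ => c) = 0) := by
  have huniv : R Finset.univ = 0 := by rw [hsym, Finset.compl_univ, hR0]
  refine ⟨fun δ hδ _ => ?_, fun c _ _ => ?_⟩
  · have hanti : Antitone (δ ∘ Tuple.sort (-δ)) := fun k l hkl =>
      neg_le_neg_iff.mp (Tuple.monotone_sort (-δ) hkl)
    rw [hr δ _ fun k l hkl => hanti hkl, lovSum_eq_sum_chainValue]
    have h := mul_le_sum_mul_sub_of_antitone hanti (F := chainValue R (Tuple.sort (-δ)))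
      (fun k => nonneg_of_symmetric_submodular hR0 hsub hsym _)
      ((chainValue_zero R _).trans hR0) (c := 0) (fun i => (hδ _).1)
    rwa [zero_mul] at h
  · rw [hr _ 1 fun _ _ _ => le_rfl, lovSum_eq_sum_chainValue, ← Finset.mul_sum,
      Fin.sum_univ_eq_sum_range (fun k => chainValue R 1 (k + 1) - chainValue R 1 k),
      Finset.sum_range_sub, chainValue_self, chainValue_zero, huniv, hR0, sub_zero, mul_zero]
end
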